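/- If Πx:A.B is typable, (Πx:A.B)σ ∈ 𝒟, and x ∉ dom(σ) ∪ FV(σ), then ⟦Πx:A.B⟧σ = {t | ∀a ∈ ⟦A⟧σ, t a ∈ ⟦B⟧[x↦a,σ]} (the interpretation of a product type is the dependent function space of the interpretations). -/

import Mathlib

set_option maxHeartbeats 1000000

/-! # Terms of λΠ/R (de Bruijn representation) -/

inductive Trm (F : Type) : Type
  | type : Trm F
  | kind : Trm F
  | var : ℕ → Trm F
  | sym : F → Trm F
  | pi : Trm F → Trm F → Trm F
  | app : Trm F → Trm F → Trm F
  | lam : Trm F → Trm F → Trm F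

namespace Trm

variable {F : Type}

/-- Lifting of a renaming under a binder. -/
def upRen (ρ : ℕ → ℕ) : ℕ → ℕ
  | 0 => 0
  | n + 1 => ρ n + 1

/-- Renaming of (de Bruijn) variables. -/
def rename (ρ : ℕ → ℕ) : Trm F → Trm F
  | .type => .type
  | .kind => .kind
  | .var n => .var (ρ n)
  | .sym f => .sym f
  | .pi A B => .pi (rename ρ A) (rename (upRen ρ) B)
  | .app t u => .app (rename ρ t) (rename ρ u)
  | .lam A b => .lam (rename ρ A) (rename (upRen ρ) b)

/-- Lifting of a substitution under a binder. -/
def up (σ : ℕ → Trm F) : ℕ → Trm F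
  | 0 => .var 0
  | n + 1 => rename Nat.succ (σ n)

/-- Capture-avoiding (parallel) substitution. -/
def subst (σ : ℕ → Trm F) : Trm F → Trm F
  | .type => .type
  | .kind => .kind
  | .var n => σ n
  | .sym f => .sym f
  | .pi A B => .pi (subst σ A) (subst (up σ) B)
  | .app t u => .app (subst σ t) (subst σ u)
  | .lam A b => .lam (subst σ A) (subst (up σ) b)

/-- Cons of a term on a substitution: `scons a σ` maps `0` to `a` and `n+1` to `σ n`. -/
def scons (a : Trm F) (σ : ℕ → Trm F) : ℕ → Trm F
  | 0 => a
  | n + 1 => σ n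

/-- Substitution of the first free variable: `t[x ↦ a]`. -/
def subst1 (a t : Trm F) : Trm F := subst (scons a .var) t

/-- Shifting of all free variables. -/
def shift : Trm F → Trm F := rename Nat.succ

/-- Application of a head term to a list of arguments: `appList h [t1,…,tn] = h t1 … tn`. -/
def appList (h : Trm F) : List (Trm F) → Trm F
  | [] => h
  | a :: as => appList (.app h a) as

/-- Free (de Bruijn) variables of a term. -/
def FV : Trm F → Set ℕ
  | .type => ∅
  | .kind => ∅
  | .var n => {n}
  | .sym _ => ∅
  | .pi A B => FV A ∪ {n | n + 1 ∈ FV B}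
  | .app t u => FV t ∪ FV u
  | .lam A b => FV A ∪ {n | n + 1 ∈ FV b}

/-- The class 𝕂 of kinds: `K = TYPE | Πx:t.K`. -/
def IsKind : Trm F → Prop
  | .type => True
  | .pi _ B => IsKind B
  | _ => False

/-- Sorts: `TYPE` and `KIND`. -/
def IsSort (s : Trm F) : Prop := s = .type ∨ s = .kind

/-- The product arity of a term: the number of leading products. -/
def piArity : Trm F → ℕ
  | .pi _ B => piArity B + 1
  | _ => 0

/-- Strip `n` leading products. -/
def piCodN : ℕ → Trm F → Trm F
  | 0, T => T
  | n + 1, .pi _ B => piCodN n B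
  | _ + 1, T => T

/-- The first `n` domains of the leading products, as a de Bruijn context
(type of variable `0` first, i.e. innermost first). -/
def teleN : ℕ → Trm F → List (Trm F)
  | 0, _ => []
  | n + 1, .pi A B => teleN n B ++ [A]
  | _ + 1, _ => []

/-- The full telescope of leading products, as a de Bruijn context. -/
def telescope (T : Trm F) : List (Trm F) := teleN (piArity T) T

/-- The domains of the leading products, outermost first. -/
def piDoms : Trm F → List (Trm F)
  | .pi A B => A :: piDoms B
  | _ => []

end Trm

/-- The subterm relation (reflexive and transitive). -/
inductive Subterm {F : Type} : Trm F → Trm F → Prop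
  | refl (t : Trm F) : Subterm t t
  | piL {t A B} : Subterm t A → Subterm t (.pi A B)
  | piR {t A B} : Subterm t B → Subterm t (.pi A B)
  | appL {t u v} : Subterm t u → Subterm t (.app u v)
  | appR {t u v} : Subterm t v → Subterm t (.app u v)
  | lamL {t A b} : Subterm t A → Subterm t (.lam A b)
  | lamR {t A b} : Subterm t b → Subterm t (.lam A b)

/-! # Rewriting -/

/-- A set of rewriting rules `l → r`. -/
abbrev Rules (F : Type) := Set (Trm F × Trm F)

/-- `R` is a rewriting system: for every rule `l → r`, `FV(r) ⊆ FV(l)` and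
`l` is of the form `f l⃗`. -/
def IsRewriteSystem {F : Type} (R : Rules F) : Prop :=
  ∀ p ∈ R, Trm.FV p.2 ⊆ Trm.FV p.1 ∧ ∃ (f : F) (ls : List (Trm F)), p.1 = Trm.appList (.sym f) ls

/-- A symbol is defined if it heads the left-hand side of some rule. -/
def Defined {F : Type} (R : Rules F) (f : F) : Prop :=
  ∃ (ls : List (Trm F)) (r : Trm F), (Trm.appList (.sym f) ls, r) ∈ R

/-- One-step reduction `→ = →β ∪ →R`: β-reduction together with the closure of the
rules of `R` by substitution and context. -/
inductive Red {F : Type} (R : Rules F) : Trm F → Trm F → Prop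
  | beta (A b a : Trm F) : Red R (.app (.lam A b) a) (Trm.subst1 a b)
  | rule {l r : Trm F} (σ : ℕ → Trm F) : (l, r) ∈ R → Red R (Trm.subst σ l) (Trm.subst σ r)
  | appL {t t' u} : Red R t t' → Red R (.app t u) (.app t' u)
  | appR {t u u'} : Red R u u' → Red R (.app t u) (.app t u')
  | piL {A A' B} : Red R A A' → Red R (.pi A B) (.pi A' B)
  | piR {A B B'} : Red R B B' → Red R (.pi A B) (.pi A B')
  | lamL {A A' b} : Red R A A' → Red R (.lam A b) (.lam A' b)
  | lamR {A b b'} : Red R b b' → Red R (.lam A b) (.lam A b')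

/-- Multi-step reduction `→*`. -/
def RedStar {F : Type} (R : Rules F) : Trm F → Trm F → Prop := Relation.ReflTransGen (Red R)

/-- Joinability `↓`. -/
def Joinable {F : Type} (R : Rules F) (t u : Trm F) : Prop :=
  ∃ v, RedStar R t v ∧ RedStar R u v

/-- Local confluence: `← · → ⊆ →* · *←`. -/
def LocallyConfluent {F : Type} (R : Rules F) : Prop :=
  ∀ t u v, Red R t u → Red R t v → Joinable R u v

/-- `t` is strongly normalizing (terminating): no infinite reduction sequence from `t`. -/
def SN {F : Type} (R : Rules F) (t : Trm F) : Prop := Acc (fun a b => Red R b a) t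

/-- The set of strongly normalizing terms. -/
def SNset {F : Type} (R : Rules F) : Set (Trm F) := {t | SN R t}

/-- `t` is in normal form. -/
def NormalForm {F : Type} (R : Rules F) (t : Trm F) : Prop := ∀ u, ¬ Red R t u

/-- Neutral terms: `(λx:A.t)u v⃗`, `x v⃗`, or `f v⃗` where every rule `f l⃗ → r ∈ R`
satisfies `|l⃗| ≤ |v⃗|`. -/
def Neutral {F : Type} (R : Rules F) (t : Trm F) : Prop :=
  (∃ (A b a : Trm F) (vs : List (Trm F)), t = Trm.appList (.app (.lam A b) a) vs) ∨
  (∃ (x : ℕ) (vs : List (Trm F)), t = Trm.appList (.var x) vs) ∨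
  (∃ (f : F) (vs : List (Trm F)), t = Trm.appList (.sym f) vs ∧
    ∀ (ls : List (Trm F)) (r : Trm F), (Trm.appList (.sym f) ls, r) ∈ R → ls.length ≤ vs.length)

/-- Computability predicates: `S ⊆ SN`, `S` is closed under reduction, and `S` contains
every neutral term all of whose one-step reducts are in `S`. -/
def IsCompPred {F : Type} (R : Rules F) (S : Set (Trm F)) : Prop :=
  S ⊆ SNset R ∧ (∀ t ∈ S, ∀ u, Red R t u → u ∈ S) ∧
  (∀ t, Neutral R t → (∀ u, Red R t u → u ∈ S) → t ∈ S)

/-! # Typing: λP extended with function symbols and conversion modulo `→` -/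

/-- The typing rules of λΠ/R: the rules of λP (in de Bruijn presentation) with the extra
rule (fun) `⊢ f : Θ_f` and conversion up to joinability for `→`. -/
inductive Typing {F : Type} (R : Rules F) (Θ sΘ : F → Trm F) :
    List (Trm F) → Trm F → Trm F → Prop
  | ax : Typing R Θ sΘ [] .type .kind
  | var {Γ A s} : Trm.IsSort s → Typing R Θ sΘ Γ A s →
      Typing R Θ sΘ (A :: Γ) (.var 0) (Trm.shift A)
  | weak {Γ A s b B} : Trm.IsSort s → Typing R Θ sΘ Γ A s → Typing R Θ sΘ Γ b B →
      Typing R Θ sΘ (A :: Γ) (Trm.shift b) (Trm.shift B)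
  | prod {Γ A B s} : Trm.IsSort s → Typing R Θ sΘ Γ A .type → Typing R Θ sΘ (A :: Γ) B s →
      Typing R Θ sΘ Γ (.pi A B) s
  | abs {Γ A b B s} : Trm.IsSort s → Typing R Θ sΘ (A :: Γ) b B →
      Typing R Θ sΘ Γ (.pi A B) s → Typing R Θ sΘ Γ (.lam A b) (.pi A B)
  | app {Γ t a A B} : Typing R Θ sΘ Γ t (.pi A B) → Typing R Θ sΘ Γ a A →
      Typing R Θ sΘ Γ (.app t a) (Trm.subst1 a B)
  | conv {Γ a A B s} : Typing R Θ sΘ Γ a A → Joinable R A B → Typing R Θ sΘ Γ B s →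
      Trm.IsSort s → Typing R Θ sΘ Γ a B
  | symb (f : F) : Trm.IsSort (sΘ f) → Typing R Θ sΘ [] (Θ f) (sΘ f) →
      Typing R Θ sΘ [] (.sym f) (Θ f)

/-- `→` preserves typing (subject reduction). -/
def PresTyping {F : Type} (R : Rules F) (Θ sΘ : F → Trm F) : Prop :=
  ∀ Γ t u T, Typing R Θ sΘ Γ t T → Red R t u → Typing R Θ sΘ Γ u T

/-- A substitution `γ` is well-typed from `Δ` to `Γ` (for a generic typing judgment `Ty`):
for all `(x : T) ∈ Δ`, `Ty Γ (xγ) (Tγ)`. -/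
def SubstTyped {F : Type} (Ty : List (Trm F) → Trm F → Trm F → Prop)
    (Γ : List (Trm F)) (γ : ℕ → Trm F) (Δ : List (Trm F)) : Prop :=
  ∀ i A, Δ[i]? = some A → Ty Γ (γ i) (Trm.subst (fun j => γ (j + i + 1)) A)

/-! # Interpretation of types as computability predicates -/

/-- `𝕀`: partial functions from terms to sets of terms. -/
abbrev Interp (F : Type) := Trm F → Part (Set (Trm F))

/-- Graph inclusion of partial functions. -/
def InterpLE {F : Type} (I J : Interp F) : Prop := ∀ T S, S ∈ I T → S ∈ J T

/-- `I` is the least fixpoint of `φ` on `𝕀` (ordered by graph inclusion). -/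
def IsLfpInterp {F : Type} (φ : Interp F → Interp F) (I : Interp F) : Prop :=
  φ I = I ∧ ∀ J, φ J = J → InterpLE I J

/-- The domain `D(I)`: terminating terms `T` such that whenever `T →* Πx:A.B`,
`A ∈ dom(I)` and `B[x↦a] ∈ dom(I)` for all `a ∈ I(A)`. -/
def domD {F : Type} (R : Rules F) (I : Interp F) : Set (Trm F) :=
  {T | SN R T ∧ ∀ A B, RedStar R T (.pi A B) →
    (I A).Dom ∧ ∀ S ∈ I A, ∀ a ∈ S, (I (Trm.subst1 a B)).Dom}

/-- `{t | ∀ a ∈ I(A), t a ∈ I(B[x↦a])}` (relational reading of the partial function `I`). -/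
def piPart {F : Type} (I : Interp F) (A B : Trm F) : Set (Trm F) :=
  {t | ∀ S ∈ I A, ∀ a ∈ S, ∀ S' ∈ I (Trm.subst1 a B), Trm.app t a ∈ S'}

open Classical in
/-- The monotone function `F : 𝕀 → 𝕀`: `dom(F(I)) = D(I)`; `F(I)(T) = SN` if the normal
form of `T` is not a product; `F(I)(T) = {t | ∀ a ∈ I(A), t a ∈ I(B[x↦a])}` if the normal
form of `T` is `Πx:A.B`. -/
noncomputable def interpF {F : Type} (R : Rules F) (I : Interp F) : Interp F := fun T =>
  ⟨T ∈ domD R I, fun _ =>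
    if h : ∃ A B, RedStar R T (.pi A B) ∧ NormalForm R (.pi A B) then
      piPart I h.choose h.choose_spec.choose
    else SNset R⟩

/-- The value of a partial interpretation at `T` (as a set). -/
def partMem {F : Type} (I : Interp F) (T : Trm F) : Set (Trm F) := {t | ∀ S ∈ I T, t ∈ S}

open Classical in
/-- The interpretation `⟦T⟧σ` of a term `T` wrt a substitution `σ`, relative to the least
fixpoint `I = ℐ` of `interpF`: `⟦s⟧σ = 𝒟` for `s` a sort;
`⟦Πx:A.K⟧σ = {t | ∀ a ∈ ⟦A⟧σ, t a ∈ ⟦K⟧[x↦a,σ]}` for `K` a kind;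
`⟦T⟧σ = ℐ(Tσ)` if `T` is neither a kind nor `KIND` and `Tσ ∈ 𝒟`; `⟦T⟧σ = SN` otherwise. -/
noncomputable def interp {F : Type} (R : Rules F) (I : Interp F) :
    Trm F → (ℕ → Trm F) → Set (Trm F)
  | .type, _ => domD R I
  | .kind, _ => domD R I
  | .pi A B, σ =>
      if Trm.IsKind B then
        {t | ∀ a ∈ interp R I A σ, Trm.app t a ∈ interp R I B (Trm.scons a σ)}
      else if Trm.subst σ (.pi A B) ∈ domD R I then partMem I (Trm.subst σ (.pi A B))
      else SNset R
  | .var n, σ =>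
      if Trm.subst σ (.var n) ∈ domD R I then partMem I (Trm.subst σ (.var n)) else SNset R
  | .sym g, σ =>
      if Trm.subst σ (.sym g) ∈ domD R I then partMem I (Trm.subst σ (.sym g)) else SNset R
  | .app t u, σ =>
      if Trm.subst σ (.app t u) ∈ domD R I then partMem I (Trm.subst σ (.app t u)) else SNset R
  | .lam A b, σ =>
      if Trm.subst σ (.lam A b) ∈ domD R I then partMem I (Trm.subst σ (.lam A b)) else SNset R

/-- `σ ⊨ Γ`: a substitution is adequate wrt an environment. -/
def Models {F : Type} (R : Rules F) (I : Interp F) (σ : ℕ → Trm F) (Γ : List (Trm F)) : Prop :=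
  ∀ i A, Γ[i]? = some A → σ i ∈ interp R I A (fun j => σ (j + i + 1))

/-- The typing map `Θ` is adequate: `f ∈ ⟦Θ_f⟧` whenever `⊢ Θ_f : s_f` and `Θ_f ∈ ⟦s_f⟧`. -/
def Adequate {F : Type} (R : Rules F) (Θ sΘ : F → Trm F) (I : Interp F) : Prop :=
  ∀ f : F, Typing R Θ sΘ [] (Θ f) (sΘ f) → Θ f ∈ interp R I (sΘ f) Trm.var →
    Trm.sym f ∈ interp R I (Θ f) Trm.var

/-- The substitution `[x⃗ ↦ l⃗]` (where `ls` lists the images of variables `0, 1, …`). -/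
def mkSubst {F : Type} (ls : List (Trm F)) : ℕ → Trm F := fun i =>
  (ls[i]?).getD (.var (i - ls.length))

/-- Composition of substitutions: `x ↦ (xγ)σ`. -/
def compSubst {F : Type} (γ σ : ℕ → Trm F) : ℕ → Trm F := fun i => Trm.subst σ (γ i)

/-- The set `ℂ` of terms `f t⃗` with `|t⃗| = arit(Θ_f)`, `⊢ Θ_f : s_f`, `Θ_f ∈ ⟦s_f⟧` and
`[x⃗↦t⃗] ⊨ Γ_f`. -/
def CC {F : Type} (R : Rules F) (Θ sΘ : F → Trm F) (I : Interp F) : Set (Trm F) :=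
  {t | ∃ (f : F) (ts : List (Trm F)), t = Trm.appList (.sym f) ts ∧
    ts.length = Trm.piArity (Θ f) ∧
    Typing R Θ sΘ [] (Θ f) (sΘ f) ∧ Θ f ∈ interp R I (sΘ f) Trm.var ∧
    Models R I (mkSubst ts.reverse) (Trm.telescope (Θ f))}

/-! # Dependency pairs -/

/-- Occurrences of `p` in a term, not at the root, such that `p` is not further applied
(i.e. `p` collects all the arguments of its head at this occurrence). -/
inductive MaxOccNR {F : Type} (p : Trm F) : Trm F → Prop
  | appL {u v} : MaxOccNR p u → MaxOccNR p (.app u v)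
  | appR {u v} : MaxOccNR p v → MaxOccNR p (.app u v)
  | appRroot {u} : MaxOccNR p (.app u p)
  | piL {A B} : MaxOccNR p A → MaxOccNR p (.pi A B)
  | piLroot {B} : MaxOccNR p (.pi p B)
  | piR {A B} : MaxOccNR p B → MaxOccNR p (.pi A B)
  | piRroot {A} : MaxOccNR p (.pi A p)
  | lamL {A b} : MaxOccNR p A → MaxOccNR p (.lam A b)
  | lamLroot {b} : MaxOccNR p (.lam p b)
  | lamR {A b} : MaxOccNR p b → MaxOccNR p (.lam A b)
  | lamRroot {A} : MaxOccNR p (.lam A p)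

/-- `p` occurs in `t` as a maximal application. -/
def MaxOcc {F : Type} (p t : Trm F) : Prop := t = p ∨ MaxOccNR p t

/-- Dependency pairs: `f l⃗ > g m⃗` iff there is a rule `f l⃗ → r ∈ R`, `g` is defined and
`g m⃗` is a subterm of `r` such that `m⃗` are all the arguments to which `g` is applied. -/
def DepPair {F : Type} (R : Rules F) (f : F) (ls : List (Trm F)) (g : F)
    (ms : List (Trm F)) : Prop :=
  Defined R g ∧ ∃ r, (Trm.appList (.sym f) ls, r) ∈ R ∧ MaxOcc (Trm.appList (.sym g) ms) r

/-- `f t⃗ →arg f u⃗`: reduction of exactly one argument. -/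
def ArgRed {F : Type} (R : Rules F) (t u : Trm F) : Prop :=
  ∃ (f : F) (pre post : List (Trm F)) (a b : Trm F), Red R a b ∧
    t = Trm.appList (.sym f) (pre ++ a :: post) ∧ u = Trm.appList (.sym f) (pre ++ b :: post)

/-- `>ₛ`: the closure of the dependency pair relation by substitution and left-application:
`f t₁…t_p >ₛ g u₁…u_q` iff there are a dependency pair `f l₁…l_i > g m₁…m_j` with `i ≤ p`
and `j ≤ q` and a substitution `σ` such that `t_k →* l_kσ` for `k ≤ i` and `m_kσ = u_k`
for `k ≤ j`. -/
def GTsub {F : Type} (R : Rules F) (t u : Trm F) : Prop :=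
  ∃ (f g : F) (ts us ls ms : List (Trm F)) (σ : ℕ → Trm F),
    t = Trm.appList (.sym f) ts ∧ u = Trm.appList (.sym g) us ∧
    DepPair R f ls g ms ∧ ls.length ≤ ts.length ∧ ms.length ≤ us.length ∧
    (∀ (k : ℕ) (tk lk : Trm F), ts[k]? = some tk → ls[k]? = some lk → RedStar R tk (Trm.subst σ lk)) ∧
    (∀ (k : ℕ) (mk : Trm F), ms[k]? = some mk → us[k]? = some (Trm.subst σ mk))

/-- The call relation `≻̃ = →arg* · >ₛ` on `ℂ`. -/
def CallRel {F : Type} (R : Rules F) (Θ sΘ : F → Trm F) (I : Interp F) (t u : Trm F) : Prop :=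
  t ∈ CC R Θ sΘ I ∧ u ∈ CC R Θ sΘ I ∧
    ∃ v, Relation.ReflTransGen (ArgRed R) t v ∧ GTsub R v u

/-! # Precedence and well-structured systems -/

/-- `f ⪰ g` (one step): `g` occurs in `Θ_f` or in the right-hand side of a rule of `f`. -/
def PrecBase {F : Type} (R : Rules F) (Θ : F → Trm F) (f g : F) : Prop :=
  Subterm (.sym g) (Θ f) ∨
  ∃ (ls : List (Trm F)) (r : Trm F), (Trm.appList (.sym f) ls, r) ∈ R ∧ Subterm (.sym g) r

/-- `⪰`: the smallest quasi-order containing `PrecBase`. -/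
def Preceq {F : Type} (R : Rules F) (Θ : F → Trm F) : F → F → Prop :=
  Relation.ReflTransGen (PrecBase R Θ)

/-- `≻`: the strict part of `⪰`. -/
def Prec {F : Type} (R : Rules F) (Θ : F → Trm F) (f g : F) : Prop :=
  Preceq R Θ f g ∧ ¬ Preceq R Θ g f

/-- The restricted type system `⊢_{≺ f}`: as `Typing`, but function symbols may only be
introduced when strictly smaller than `f` in the precedence. -/
inductive LTyp {F : Type} (R : Rules F) (Θ sΘ : F → Trm F) (f : F) :
    List (Trm F) → Trm F → Trm F → Prop
  | ax : LTyp R Θ sΘ f [] .type .kind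
  | var {Γ A s} : Trm.IsSort s → LTyp R Θ sΘ f Γ A s →
      LTyp R Θ sΘ f (A :: Γ) (.var 0) (Trm.shift A)
  | weak {Γ A s b B} : Trm.IsSort s → LTyp R Θ sΘ f Γ A s → LTyp R Θ sΘ f Γ b B →
      LTyp R Θ sΘ f (A :: Γ) (Trm.shift b) (Trm.shift B)
  | prod {Γ A B s} : Trm.IsSort s → LTyp R Θ sΘ f Γ A .type → LTyp R Θ sΘ f (A :: Γ) B s →
      LTyp R Θ sΘ f Γ (.pi A B) s
  | abs {Γ A b B s} : Trm.IsSort s → LTyp R Θ sΘ f (A :: Γ) b B →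
      LTyp R Θ sΘ f Γ (.pi A B) s → LTyp R Θ sΘ f Γ (.lam A b) (.pi A B)
  | app {Γ t a A B} : LTyp R Θ sΘ f Γ t (.pi A B) → LTyp R Θ sΘ f Γ a A →
      LTyp R Θ sΘ f Γ (.app t a) (Trm.subst1 a B)
  | conv {Γ a A B s} : LTyp R Θ sΘ f Γ a A → Joinable R A B → LTyp R Θ sΘ f Γ B s →
      Trm.IsSort s → LTyp R Θ sΘ f Γ a B
  | symb (g : F) : Prec R Θ f g → Trm.IsSort (sΘ g) → LTyp R Θ sΘ f [] (Θ g) (sΘ g) →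
      LTyp R Θ sΘ f [] (.sym g) (Θ g)

/-- The arguments `y⃗γ = [y₁γ, …, y_jγ]` of an instantiated dependency pair right-hand
side, where `y_j` is de Bruijn variable `0`. -/
def dpArgs {F : Type} (γ : ℕ → Trm F) (j : ℕ) : List (Trm F) :=
  (List.range j).reverse.map γ

/-- The restricted type system `⊢_{f l⃗}` (computability closure): as `Typing`, except that
types are required to be typable using symbols smaller than `f` only, and function symbols
are introduced either as undefined constants or through instances of dependency pairs of
`f l⃗`. -/
inductive RTyp {F : Type} (R : Rules F) (Θ sΘ : F → Trm F) (f : F) (ls : List (Trm F)) :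
    List (Trm F) → Trm F → Trm F → Prop
  | ax : RTyp R Θ sΘ f ls [] .type .kind
  | var {Γ A s} : Trm.IsSort s → LTyp R Θ sΘ f Γ A s →
      RTyp R Θ sΘ f ls (A :: Γ) (.var 0) (Trm.shift A)
  | weak {Γ A s b B} : Trm.IsSort s → LTyp R Θ sΘ f Γ A s → RTyp R Θ sΘ f ls Γ b B →
      RTyp R Θ sΘ f ls (A :: Γ) (Trm.shift b) (Trm.shift B)
  | prod {Γ A B s} : Trm.IsSort s → RTyp R Θ sΘ f ls Γ A .type →
      RTyp R Θ sΘ f ls (A :: Γ) B s → RTyp R Θ sΘ f ls Γ (.pi A B) s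
  | abs {Γ A b B s} : Trm.IsSort s → RTyp R Θ sΘ f ls (A :: Γ) b B →
      LTyp R Θ sΘ f Γ (.pi A B) s → RTyp R Θ sΘ f ls Γ (.lam A b) (.pi A B)
  | app {Γ t a A B s} : Trm.IsSort s → RTyp R Θ sΘ f ls Γ t (.pi A B) →
      RTyp R Θ sΘ f ls Γ a A → LTyp R Θ sΘ f Γ (.pi A B) s →
      RTyp R Θ sΘ f ls Γ (.app t a) (Trm.subst1 a B)
  | conv {Γ a A B s s'} : Trm.IsSort s → Trm.IsSort s' → RTyp R Θ sΘ f ls Γ a A →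
      Joinable R A B → LTyp R Θ sΘ f Γ B s → LTyp R Θ sΘ f Γ A s' →
      RTyp R Θ sΘ f ls Γ a B
  | dp {Γ : List (Trm F)} (g : F) (γ : ℕ → Trm F) (j : ℕ) :
      j ≤ Trm.piArity (Θ g) → Trm.IsSort (sΘ g) → LTyp R Θ sΘ f [] (Θ g) (sΘ g) →
      (∀ i A, (Trm.teleN j (Θ g))[i]? = some A →
        RTyp R Θ sΘ f ls Γ (γ i) (Trm.subst (fun k => γ (k + i + 1)) A)) →
      DepPair R f ls g (dpArgs γ j) →
      RTyp R Θ sΘ f ls Γ (Trm.appList (.sym g) (dpArgs γ j)) (Trm.subst γ (Trm.piCodN j (Θ g)))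
  | const (g : F) : ¬ Defined R g → Trm.IsSort (sΘ g) → LTyp R Θ sΘ f [] (Θ g) (sΘ g) →
      RTyp R Θ sΘ f ls [] (.sym g) (Θ g)

/-- `R` is well-structured (wrt the assignment `Δ` of an environment to every rule):
(a) `≻` is well-founded; (b) `|l⃗| ≤ arit(Θ_f)` for every rule `f l⃗ → r`;
(c) `|m⃗| ≤ arit(Θ_g)` for every dependency pair `f l⃗ > g m⃗`;
(d) `Δ_{f l⃗→r} ⊢_{f l⃗} r : U[x⃗↦l⃗]` for every rule `f l⃗ → r`, where `Θ_f = Πx⃗:T⃗.U`. -/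
def WellStructured {F : Type} (R : Rules F) (Θ sΘ : F → Trm F)
    (Δ : Trm F → Trm F → List (Trm F)) : Prop :=
  WellFounded (fun g f => Prec R Θ f g) ∧
  (∀ l r, (l, r) ∈ R → ∀ (f : F) ls, l = Trm.appList (.sym f) ls →
    ls.length ≤ Trm.piArity (Θ f)) ∧
  (∀ (f : F) ls (g : F) ms, DepPair R f ls g ms → ms.length ≤ Trm.piArity (Θ g)) ∧
  (∀ l r, (l, r) ∈ R → ∀ (f : F) ls, l = Trm.appList (.sym f) ls →
    RTyp R Θ sΘ f ls (Δ l r) r (Trm.subst (mkSubst ls.reverse) (Trm.piCodN ls.length (Θ f))))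

/-- `R` is accessible: for every rule `f l⃗ → r` with `Θ_f = Πx⃗:T⃗.U`, `|x⃗| = |l⃗|`, and
every substitution `σ`, `σ ⊨ Δ_{f l⃗→r}` whenever `⊢ Θ_f : s_f`, `Θ_f ∈ ⟦s_f⟧` and
`[x⃗↦l⃗]σ ⊨ x⃗:T⃗`. -/
def Accessible {F : Type} (R : Rules F) (Θ sΘ : F → Trm F) (I : Interp F)
    (Δ : Trm F → Trm F → List (Trm F)) : Prop :=
  ∀ l r, (l, r) ∈ R → ∀ (f : F) ls, l = Trm.appList (.sym f) ls → ∀ σ : ℕ → Trm F,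
    Typing R Θ sΘ [] (Θ f) (sΘ f) → Θ f ∈ interp R I (sΘ f) Trm.var →
    Models R I (compSubst (mkSubst ls.reverse) σ) (Trm.teleN ls.length (Θ f)) →
    Models R I σ (Δ l r)

/-- A term in `𝕂 ∪ {KIND}`. -/
def IsKindLike {F : Type} (t : Trm F) : Prop := Trm.IsKind t ∨ t = .kind

/-- `R` is plain function-passing (PFP): for every rule `f l⃗ → r` with `Θ_f = Πx⃗:T⃗.U` and
`|x⃗| = |l⃗|`, no `l_i` is a kind or `KIND`, and every `(y : T) ∈ Δ_{f l⃗→r}` satisfies: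
either there is `i` with `y = l_i` and `T = T_i[x⃗↦l⃗]`, or `y ∈ FV(l_i)` and `T = D t⃗`
with `D` undefined and `|t⃗| = arit(Θ_D)`. -/
def PFP {F : Type} (R : Rules F) (Θ : F → Trm F) (Δ : Trm F → Trm F → List (Trm F)) : Prop :=
  ∀ l r, (l, r) ∈ R → ∀ (f : F) ls, l = Trm.appList (.sym f) ls →
    (∀ li ∈ ls, ¬ IsKindLike li) ∧
    (∀ i A, (Δ l r)[i]? = some A →
      (∃ (k : ℕ) (Tk : Trm F), ls[k]? = some (Trm.var i) ∧ (Trm.piDoms (Θ f))[k]? = some Tk ∧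
        Trm.rename (fun j => j + i + 1) A = Trm.subst (mkSubst ((ls.take k).reverse)) Tk) ∨
      ((∃ (k : ℕ) (lk : Trm F), ls[k]? = some lk ∧ i ∈ Trm.FV lk) ∧
        ∃ (D : F) (ts : List (Trm F)), Trm.rename (fun j => j + i + 1) A =
          Trm.appList (.sym D) ts ∧ ¬ Defined R D ∧ ts.length = Trm.piArity (Θ D)))

/-! # Size-change termination -/

/-- Entries of size-change matrices: `−1`, `0` or `∞`. -/
inductive SCTe : Type
  | minusOne : SCTe
  | zero : SCTe
  | infty : SCTe
deriving DecidableEq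

/-- Min-plus multiplication of entries (addition, truncated at `−1`). -/
def SCTe.comp : SCTe → SCTe → SCTe
  | .infty, _ => .infty
  | _, .infty => .infty
  | .minusOne, _ => .minusOne
  | _, .minusOne => .minusOne
  | .zero, .zero => .zero

/-- Minimum of entries (`−1 < 0 < ∞`). -/
def SCTe.min : SCTe → SCTe → SCTe
  | .minusOne, _ => .minusOne
  | _, .minusOne => .minusOne
  | .zero, _ => .zero
  | .infty, x => x

/-- Base of the relation `⊵`: `f t₁…t_n ⊵ t_i` for `f ∈ F`. -/
def ArgSubBase {F : Type} (t u : Trm F) : Prop :=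
  ∃ (f : F) (ts : List (Trm F)), t = Trm.appList (.sym f) ts ∧ u ∈ ts

/-- `⊵`: the smallest transitive relation such that `f t₁…t_n ⊵ t_i` for `f ∈ F`. -/
def ArgGT {F : Type} : Trm F → Trm F → Prop := Relation.TransGen ArgSubBase

open Classical in
/-- The size-change matrix of a dependency pair `f l₁…l_p > g m₁…m_q`:
`a_{ij} = −1` if `l_i ⊵ m_j`, `a_{ij} = 0` if `l_i = m_j`, `a_{ij} = ∞` otherwise
(in particular if `i > p` or `j > q`). -/
noncomputable def dpMatrix {F : Type} (ls ms : List (Trm F)) : ℕ → ℕ → SCTe := fun i j =>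
  match ls[i]?, ms[j]? with
  | some li, some mj =>
      if ArgGT li mj then .minusOne else if li = mj then .zero else .infty
  | _, _ => .infty

/-- Min-plus product of matrices, the middle dimension being `d`. -/
def matComp (d : ℕ) (M N : ℕ → ℕ → SCTe) : ℕ → ℕ → SCTe := fun i j =>
  ((List.range d).map fun k => (M i k).comp (N k j)).foldr SCTe.min .infty

/-- The transitive closure of the call graph of `R`: edges are labeled by the matrices of
the dependency pairs, multiplied in the min-plus semiring along paths. -/
inductive TCEdge {F : Type} (R : Rules F) (Θ : F → Trm F) : F → F → (ℕ → ℕ → SCTe) → Prop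
  | base {f g : F} {ls ms : List (Trm F)} : DepPair R f ls g ms →
      TCEdge R Θ f g (dpMatrix ls ms)
  | comp {f g h : F} {M N : ℕ → ℕ → SCTe} : TCEdge R Θ f g M → TCEdge R Θ g h N →
      TCEdge R Θ f h (matComp (Trm.piArity (Θ g)) M N)

/-- `R` is size-change terminating: in the transitive closure of the call graph, every
idempotent matrix labeling a loop has some `−1` on its diagonal. -/
def SCT {F : Type} (R : Rules F) (Θ : F → Trm F) : Prop :=
  ∀ (f : F) (M : ℕ → ℕ → SCTe), TCEdge R Θ f f M → matComp (Trm.piArity (Θ f)) M M = M →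
    ∃ i < Trm.piArity (Θ f), M i i = SCTe.minusOne

/-! A product in `𝒟` reduces to a normal form `Πx:A'.B'` with `A →* A'` and `B →* B'`, and
`ℐ` is invariant under reduction on `𝒟` because, by Newman's lemma, a terminating term and its
reducts have the same normal form. Hence `ℐ(Πx:A.B)`, which is defined from `A'` and `B'`, is
already the dependent function space of `ℐ(A)` and the `ℐ(B[x↦a])`. It remains to see
that `⟦·⟧σ` is `ℐ(·σ)` on both components. If `B` is a kind the equation is the defining clause of
`⟦·⟧`; otherwise it suffices that `A` is neither a kind nor `KIND` and that `B` is not `KIND`,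
which typability guarantees since by subject reduction every typable kind has type `KIND`. -/

section AbstractRewriting

open Relation

variable {α : Type*} {r : α → α → Prop}

theorem exists_reflTransGen_irreducible {a : α} (ha : Acc (flip r) a) :
    ∃ b, ReflTransGen r a b ∧ ∀ c, ¬ r b c := by
  induction ha with
  | intro a _ ih =>
    by_cases hn : ∀ c, ¬ r a c
    · exact ⟨a, .refl, hn⟩
    · obtain ⟨c, hac⟩ := not_forall_not.1 hn
      obtain ⟨b, hcb, hb⟩ := ih c hac
      exact ⟨b, .head hac hcb, hb⟩

theorem newman (hr : ∀ a b c, r a b → r a c → Join (ReflTransGen r) b c) {a b c : α}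
    (ha : Acc (flip r) a) (hab : ReflTransGen r a b) (hac : ReflTransGen r a c) :
    Join (ReflTransGen r) b c := by
  induction ha generalizing b c with
  | intro a _ ih =>
    rcases hab.cases_head with rfl | ⟨b₁, hab₁, hb₁b⟩
    · exact ⟨c, hac, .refl⟩
    rcases hac.cases_head with rfl | ⟨c₁, hac₁, hc₁c⟩
    · exact ⟨b, .refl, hab⟩
    obtain ⟨d, hb₁d, hc₁d⟩ := hr a b₁ c₁ hab₁ hac₁
    obtain ⟨e, hbe, hde⟩ := ih b₁ hab₁ hb₁b hb₁d
    obtain ⟨f, hef, hcf⟩ := ih c₁ hac₁ (hc₁d.trans hde) hc₁c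
    exact ⟨f, hbe.trans hef, hcf⟩

end AbstractRewriting

namespace Trm

variable {F : Type}

theorem upRen_comp (ρ ρ' : ℕ → ℕ) : upRen (ρ' ∘ ρ) = upRen ρ' ∘ upRen ρ := by
  funext n; cases n <;> rfl

theorem rename_rename (t : Trm F) (ρ ρ' : ℕ → ℕ) :
    rename ρ' (rename ρ t) = rename (ρ' ∘ ρ) t := by
  induction t generalizing ρ ρ' <;> simp_all [rename, upRen_comp]

theorem upRen_id : upRen id = id := by
  funext n; cases n <;> rfl

theorem rename_id (t : Trm F) : rename id t = t := by
  induction t <;> simp_all [rename, upRen_id]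

theorem up_comp (ρ : ℕ → ℕ) (σ : ℕ → Trm F) : up (σ ∘ ρ) = up σ ∘ upRen ρ := by
  funext n; cases n <;> rfl

theorem subst_rename (t : Trm F) (ρ : ℕ → ℕ) (σ : ℕ → Trm F) :
    subst σ (rename ρ t) = subst (σ ∘ ρ) t := by
  induction t generalizing ρ σ <;> simp_all [rename, subst, up_comp]

theorem up_rename_comp (σ : ℕ → Trm F) (ρ : ℕ → ℕ) :
    up (rename ρ ∘ σ) = rename (upRen ρ) ∘ up σ := by
  funext n
  cases n with
  | zero => rfl
  | succ n => simp only [up, Function.comp_apply, rename_rename]; rfl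

theorem rename_subst (t : Trm F) (σ : ℕ → Trm F) (ρ : ℕ → ℕ) :
    rename ρ (subst σ t) = subst (rename ρ ∘ σ) t := by
  induction t generalizing ρ σ <;> simp_all [rename, subst, up_rename_comp]

theorem up_compSubst (τ σ : ℕ → Trm F) :
    up (compSubst τ σ) = compSubst (up τ) (up σ) := by
  funext n
  cases n with
  | zero => rfl
  | succ n => simp only [up, compSubst, rename_subst, subst_rename]; rfl

theorem subst_subst (t : Trm F) (τ σ : ℕ → Trm F) :
    subst σ (subst τ t) = subst (compSubst τ σ) t := by
  induction t generalizing τ σ with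
  | var n => rfl
  | _ => simp_all [subst, up_compSubst]

theorem up_var : up (var : ℕ → Trm F) = var := by
  funext n; cases n <;> rfl

theorem subst_var (t : Trm F) : subst var t = t := by
  induction t <;> simp_all [subst, up_var]

theorem subst1_subst_up (a t : Trm F) (σ : ℕ → Trm F) :
    subst1 a (subst (up σ) t) = subst (scons a σ) t := by
  rw [subst1, subst_subst]
  congr 1
  funext n
  cases n with
  | zero => rfl
  | succ n => exact (subst_rename (σ n) _ _).trans (subst_var (σ n))

theorem subst_subst1 (a t : Trm F) (σ : ℕ → Trm F) :
    subst σ (subst1 a t) = subst1 (subst σ a) (subst (up σ) t) := by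
  rw [subst1_subst_up, subst1, subst_subst]
  congr 1
  funext n; cases n <;> rfl

theorem isKind_rename {t : Trm F} {ρ : ℕ → ℕ} : IsKind (rename ρ t) ↔ IsKind t := by
  induction t generalizing ρ <;> simp_all [rename, IsKind]

theorem rename_eq_kind {t : Trm F} {ρ : ℕ → ℕ} : rename ρ t = kind ↔ t = kind := by
  cases t <;> simp [rename]

theorem isKindLike_rename {t : Trm F} {ρ : ℕ → ℕ} :
    IsKindLike (rename ρ t) ↔ IsKindLike t := by
  rw [IsKindLike, IsKindLike, isKind_rename, rename_eq_kind]

theorem subst_appList (σ : ℕ → Trm F) (h : Trm F) (ts : List (Trm F)) :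
    subst σ (appList h ts) = appList (subst σ h) (ts.map (subst σ)) := by
  induction ts generalizing h with
  | nil => rfl
  | cons _ _ ih => exact ih _

theorem appList_eq_self_or_app (h : Trm F) (ts : List (Trm F)) :
    appList h ts = h ∨ ∃ u v, appList h ts = app u v := by
  induction ts generalizing h with
  | nil => exact .inl rfl
  | cons a _ ih => exact .inr ((ih (app h a)).elim (fun e => ⟨h, a, e⟩) id)

end Trm

section Reduction

variable {F : Type} {R : Rules F}

theorem IsRewriteSystem.subst_lhs_eq_sym_or_app (hRS : IsRewriteSystem R) {l r : Trm F}
    (h : (l, r) ∈ R) (σ : ℕ → Trm F) :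
    (∃ f, Trm.subst σ l = .sym f) ∨ ∃ u v, Trm.subst σ l = .app u v := by
  obtain ⟨-, f, ls, rfl : l = _⟩ := hRS _ h
  rw [Trm.subst_appList]
  exact (Trm.appList_eq_self_or_app _ _).imp_left fun e => ⟨f, e⟩

theorem Red.pi_inv (hRS : IsRewriteSystem R) {A B U : Trm F} (h : Red R (.pi A B) U) :
    (∃ A', U = .pi A' B ∧ Red R A A') ∨ ∃ B', U = .pi A B' ∧ Red R B B' := by
  generalize e : Trm.pi A B = T at h
  cases h with
  | rule σ hr => rcases hRS.subst_lhs_eq_sym_or_app hr σ with ⟨f, h⟩ | ⟨u, v, h⟩ <;> simp [h] at e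
  | piL h => cases e; exact .inl ⟨_, rfl, h⟩
  | piR h => cases e; exact .inr ⟨_, rfl, h⟩
  | _ => cases e

theorem RedStar.pi_inv (hRS : IsRewriteSystem R) {A B U : Trm F} (h : RedStar R (.pi A B) U) :
    ∃ A' B', U = .pi A' B' ∧ RedStar R A A' ∧ RedStar R B B' := by
  induction h with
  | refl => exact ⟨A, B, rfl, .refl, .refl⟩
  | tail _ h ih =>
    obtain ⟨A₁, B₁, rfl, hA, hB⟩ := ih
    rcases h.pi_inv hRS with ⟨A₂, rfl, hA₂⟩ | ⟨B₂, rfl, hB₂⟩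
    · exact ⟨A₂, B₁, rfl, hA.tail hA₂, hB⟩
    · exact ⟨A₁, B₂, rfl, hA, hB.tail hB₂⟩

theorem normalForm_kind (hRS : IsRewriteSystem R) : NormalForm R (.kind : Trm F) := by
  intro u h
  generalize e : (Trm.kind : Trm F) = T at h
  cases h with
  | rule σ hr => rcases hRS.subst_lhs_eq_sym_or_app hr σ with ⟨f, h⟩ | ⟨u, v, h⟩ <;> simp [h] at e
  | _ => cases e

theorem NormalForm.redStar_iff_eq {t u : Trm F} (ht : NormalForm R t) :
    RedStar R t u ↔ u = t :=
  Relation.reflTransGen_iff_eq ht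

theorem Red.subst {t u : Trm F} (h : Red R t u) (σ : ℕ → Trm F) :
    Red R (Trm.subst σ t) (Trm.subst σ u) := by
  induction h generalizing σ with
  | beta A b a => rw [Trm.subst_subst1]; exact .beta _ _ _
  | rule τ h => rw [Trm.subst_subst, Trm.subst_subst]; exact .rule _ h
  | appL _ ih => exact .appL (ih σ)
  | appR _ ih => exact .appR (ih σ)
  | piL _ ih => exact .piL (ih σ)
  | piR _ ih => exact .piR (ih _)
  | lamL _ ih => exact .lamL (ih σ)
  | lamR _ ih => exact .lamR (ih _)

theorem RedStar.subst {t u : Trm F} (h : RedStar R t u) (σ : ℕ → Trm F) :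
    RedStar R (Trm.subst σ t) (Trm.subst σ u) :=
  Relation.ReflTransGen.lift (Trm.subst σ) (fun _ _ h => h.subst σ) _ _ h

theorem SN.redStar {t u : Trm F} (ht : SN R t) (h : RedStar R t u) : SN R u := by
  induction h with
  | refl => exact ht
  | tail _ h ih => exact ih.inv h

theorem LocallyConfluent.redStar_normalForm_iff (hconf : LocallyConfluent R) {t u v : Trm F}
    (ht : SN R t) (htu : RedStar R t u) (hv : NormalForm R v) :
    RedStar R t v ↔ RedStar R u v := by
  refine ⟨fun htv => ?_, htu.trans⟩
  obtain ⟨w, huw, hvw⟩ := newman hconf ht htu htv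
  rwa [hv.redStar_iff_eq.1 hvw] at huw

end Reduction

section Typability

variable {F : Type} {R : Rules F} {Θ sΘ : F → Trm F} {Γ : List (Trm F)}

theorem PresTyping.redStar (hpres : PresTyping R Θ sΘ) {t u T : Trm F}
    (h : Typing R Θ sΘ Γ t T) (hr : RedStar R t u) : Typing R Θ sΘ Γ u T := by
  induction hr with
  | refl => exact h
  | tail _ hr ih => exact hpres _ _ _ _ ih hr

theorem Typing.ne_kind {t T : Trm F} (h : Typing R Θ sΘ Γ t T) : t ≠ .kind := by
  induction h with
  | weak _ _ _ _ ih => exact fun e => ih (Trm.rename_eq_kind.1 e)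
  | conv _ _ _ _ ih _ => exact ih
  | _ => nofun

theorem Typing.not_joinable_kind (hRS : IsRewriteSystem R) (hpres : PresTyping R Θ sΘ)
    {t T : Trm F} (h : Typing R Θ sΘ Γ t T) : ¬ Joinable R .kind t := by
  rintro ⟨v, hkv, htv⟩
  rw [(normalForm_kind hRS).redStar_iff_eq.1 hkv] at htv
  exact (hpres.redStar h htv).ne_kind rfl

theorem Typing.eq_kind_of_isKind (hRS : IsRewriteSystem R) (hpres : PresTyping R Θ sΘ)
    {t T : Trm F} (h : Typing R Θ sΘ Γ t T) (ht : Trm.IsKind t) : T = .kind := by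
  induction h with
  | ax => rfl
  | weak _ _ _ _ ih => exact Trm.rename_eq_kind.2 (ih (Trm.isKind_rename.1 ht))
  | prod _ _ _ _ ih => exact ih ht
  | conv _ hj hB _ ih _ => exact (hB.not_joinable_kind hRS hpres (ih ht ▸ hj)).elim
  | _ => exact ht.elim

/-- The renaming accounts for the uses of the weakening rule below the product rule. -/
theorem Typing.pi_inv {A B T : Trm F} (h : Typing R Θ sΘ Γ (.pi A B) T) :
    ∃ (Γ₀ : List (Trm F)) (A₀ B₀ s : Trm F) (ρ : ℕ → ℕ),
      A = .rename ρ A₀ ∧ B = .rename (Trm.upRen ρ) B₀ ∧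
        Typing R Θ sΘ Γ₀ A₀ .type ∧ Typing R Θ sΘ (A₀ :: Γ₀) B₀ s := by
  generalize e : Trm.pi A B = t at h
  induction h generalizing A B with
  | @prod Γ _ _ s _ hA hB _ _ =>
    cases e
    exact ⟨Γ, _, _, s, id, (Trm.rename_id _).symm, by rw [Trm.upRen_id, Trm.rename_id], hA, hB⟩
  | @weak _ _ _ b _ _ _ _ _ ih =>
    cases b with
    | pi A₁ B₁ =>
      cases e
      obtain ⟨Γ₀, A₀, B₀, s, ρ, rfl, rfl, hA, hB⟩ := ih rfl
      refine ⟨Γ₀, A₀, B₀, s, Nat.succ ∘ ρ, Trm.rename_rename _ _ _, ?_, hA, hB⟩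
      rw [Trm.rename_rename, Trm.upRen_comp]
    | _ => cases e
  | conv _ _ _ _ ih _ => exact ih e
  | _ => cases e

theorem Typing.pi_dom_not_isKindLike (hRS : IsRewriteSystem R) (hpres : PresTyping R Θ sΘ)
    {A B T : Trm F} (h : Typing R Θ sΘ Γ (.pi A B) T) : ¬ IsKindLike A := by
  obtain ⟨_, A₀, _, _, _, rfl, -, hA, -⟩ := h.pi_inv
  rw [Trm.isKindLike_rename]
  rintro (hK | rfl)
  · cases hA.eq_kind_of_isKind hRS hpres hK
  · exact hA.ne_kind rfl

theorem Typing.pi_cod_ne_kind {A B T : Trm F} (h : Typing R Θ sΘ Γ (.pi A B) T) :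
    B ≠ .kind := by
  obtain ⟨_, _, _, _, _, -, rfl, -, hB⟩ := h.pi_inv
  exact mt Trm.rename_eq_kind.1 hB.ne_kind

end Typability

section Interpretation

variable {F : Type} {R : Rules F} {I : Interp F}

theorem partMem_of_mem {T : Trm F} {S : Set (Trm F)} (hS : S ∈ I T) : partMem I T = S :=
  Set.ext fun _ => ⟨fun h => h S hS, fun h _ hS' => Part.mem_unique hS hS' ▸ h⟩

theorem piPart_eq_of_dom {A : Trm F} (hA : (I A).Dom) (B : Trm F) :
    piPart I A B =
      {t | ∀ a ∈ partMem I A, Trm.app t a ∈ partMem I (Trm.subst1 a B)} := by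
  obtain ⟨S, hS⟩ := Part.dom_iff_mem.1 hA
  ext t
  simp only [piPart, partMem_of_mem hS, Part.eq_some_iff.2 hS, Part.mem_some_iff, forall_eq]
  rfl

theorem domD_redStar {T T' : Trm F} (hT : T ∈ domD R I) (h : RedStar R T T') :
    T' ∈ domD R I :=
  ⟨hT.1.redStar h, fun A B hp => hT.2 A B (h.trans hp)⟩

open Classical in
theorem interpF_redStar (hconf : LocallyConfluent R) {T T' : Trm F} (hT : T ∈ domD R I)
    (h : RedStar R T T') : interpF R I T' = interpF R I T := by
  have hnf : (fun A B => RedStar R T' (.pi A B) ∧ NormalForm R (.pi A B)) =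
      fun A B => RedStar R T (.pi A B) ∧ NormalForm R (.pi A B) :=
    funext₂ fun A B => propext <|
      and_congr_left fun hn => (hconf.redStar_normalForm_iff hT.1 h hn).symm
  exact Part.ext' (iff_of_true (domD_redStar hT h) hT) fun _ _ =>
    congrArg (fun P : Trm F → Trm F → Prop =>
      if hex : ∃ A B, P A B then piPart I hex.choose hex.choose_spec.choose else SNset R) hnf

theorem piPart_mem_interpF_pi {A B : Trm F} (hn : NormalForm R (.pi A B))
    (hd : .pi A B ∈ domD R I) : piPart I A B ∈ interpF R I (.pi A B) := by
  have hex : ∃ A' B', RedStar R (.pi A B) (.pi A' B') ∧ NormalForm R (.pi A' B') :=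
    ⟨A, B, .refl, hn⟩
  refine ⟨hd, ?_⟩
  simp only [interpF, dif_pos hex]
  have e := hn.redStar_iff_eq.1 hex.choose_spec.choose_spec.1
  injection e with hA hB
  exact congrArg₂ (piPart I) hA hB

theorem mem_domD_iff_dom (hI : interpF R I = I) {T : Trm F} : T ∈ domD R I ↔ (I T).Dom := by
  conv_rhs => rw [← hI]
  rfl

theorem partMem_redStar (hconf : LocallyConfluent R) (hI : interpF R I = I) {T T' : Trm F}
    (hT : T ∈ domD R I) (h : RedStar R T T') : partMem I T' = partMem I T := by
  have e : I T' = I T := by simpa only [hI] using interpF_redStar hconf hT h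
  rw [partMem, e, partMem]

theorem pi_dom_mem_domD (hI : interpF R I = I) {A B : Trm F} (h : .pi A B ∈ domD R I) :
    A ∈ domD R I :=
  (mem_domD_iff_dom hI).2 (h.2 A B .refl).1

theorem pi_cod_subst1_mem_domD (hI : interpF R I = I) {A B a : Trm F}
    (h : .pi A B ∈ domD R I) (ha : a ∈ partMem I A) : Trm.subst1 a B ∈ domD R I := by
  obtain ⟨hA, hB⟩ := h.2 A B .refl
  exact (mem_domD_iff_dom hI).2 (hB _ (Part.get_mem hA) a (ha _ (Part.get_mem hA)))

theorem partMem_pi (hRS : IsRewriteSystem R) (hconf : LocallyConfluent R)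
    (hI : interpF R I = I) {A B : Trm F} (h : .pi A B ∈ domD R I) :
    partMem I (.pi A B) =
      {t | ∀ a ∈ partMem I A, Trm.app t a ∈ partMem I (Trm.subst1 a B)} := by
  obtain ⟨_, hN, hn⟩ := exists_reflTransGen_irreducible h.1
  obtain ⟨A', B', rfl, hA, hB⟩ := RedStar.pi_inv hRS hN
  have hN_mem : .pi A' B' ∈ domD R I := domD_redStar h hN
  have hA_val : partMem I A' = partMem I A :=
    partMem_redStar hconf hI (pi_dom_mem_domD hI h) hA
  have hB_val : ∀ a ∈ partMem I A,
      partMem I (Trm.subst1 a B') = partMem I (Trm.subst1 a B) := fun a ha =>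
    partMem_redStar hconf hI (pi_cod_subst1_mem_domD hI h ha) (hB.subst _)
  calc partMem I (.pi A B)
      = partMem I (.pi A' B') := (partMem_redStar hconf hI h hN).symm
    _ = piPart I A' B' := partMem_of_mem (by
      simpa only [hI] using piPart_mem_interpF_pi hn hN_mem)
    _ = {t | ∀ a ∈ partMem I A', Trm.app t a ∈ partMem I (Trm.subst1 a B')} :=
      piPart_eq_of_dom ((mem_domD_iff_dom hI).1 (pi_dom_mem_domD hI hN_mem)) B'
    _ = {t | ∀ a ∈ partMem I A, Trm.app t a ∈ partMem I (Trm.subst1 a B)} := by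
      ext t
      rw [hA_val]
      exact forall₂_congr fun a ha => by rw [hB_val a ha]

theorem interp_eq_partMem {T : Trm F} {σ : ℕ → Trm F} (hT : ¬ IsKindLike T)
    (hd : Trm.subst σ T ∈ domD R I) : interp R I T σ = partMem I (Trm.subst σ T) := by
  cases T with
  | type => exact (hT (.inl trivial)).elim
  | kind => exact (hT (.inr rfl)).elim
  | pi A B =>
    have hB : ¬ Trm.IsKind B := fun h => hT (.inl h)
    rw [interp, if_neg hB, if_pos hd]
  | _ => rw [interp, if_pos hd]

theorem interp_pi_general (hRS : IsRewriteSystem R) (hconf : LocallyConfluent R)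
    (hI : interpF R I = I) {A B : Trm F} {σ : ℕ → Trm F} (hA : ¬ IsKindLike A)
    (hB : B ≠ .kind) (hdom : Trm.subst σ (.pi A B) ∈ domD R I) :
    interp R I (.pi A B) σ =
      {t | ∀ a ∈ interp R I A σ, Trm.app t a ∈ interp R I B (Trm.scons a σ)} := by
  by_cases hBK : Trm.IsKind B
  · rw [interp, if_pos hBK]
  have hpi : ¬ IsKindLike (.pi A B) := by rintro (h | ⟨⟨⟩⟩); exact hBK h
  have hA_val : interp R I A σ = partMem I (Trm.subst σ A) :=
    interp_eq_partMem hA (pi_dom_mem_domD hI hdom)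
  have hB_val : ∀ a ∈ partMem I (Trm.subst σ A), interp R I B (Trm.scons a σ) =
      partMem I (Trm.subst1 a (Trm.subst (Trm.up σ) B)) := by
    intro a ha
    have hd := pi_cod_subst1_mem_domD hI hdom ha
    rw [Trm.subst1_subst_up] at hd ⊢
    exact interp_eq_partMem (not_or.2 ⟨hBK, hB⟩) hd
  rw [interp_eq_partMem hpi hdom, hA_val]
  refine (partMem_pi hRS hconf hI hdom).trans ?_
  ext t
  exact forall₂_congr fun a ha => by rw [hB_val a ha]

end Interpretation


/-- Lemma 4(d) of the paper. If `Πx:A.B` is typable and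
`(Πx:A.B)σ ∈ 𝒟`, then `⟦Πx:A.B⟧σ = {t | ∀ a ∈ ⟦A⟧σ, t a ∈ ⟦B⟧[x↦a,σ]}`.
(In the de Bruijn representation, the freshness condition `x ∉ dom(σ) ∪ FV(σ)` is
built into the lifting of substitutions.) -/
theorem interp_pi {F : Type} (R : Rules F) (Θ sΘ : F → Trm F)
    (hRS : IsRewriteSystem R)
    (hconf : LocallyConfluent R)
    (hpres : PresTyping R Θ sΘ)
    (calI : Interp F) (hlfp : IsLfpInterp (interpF R) calI)
    (A B : Trm F) (σ : ℕ → Trm F)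
    (htyp : ∃ (Γ : List (Trm F)) (U : Trm F), Typing R Θ sΘ Γ (.pi A B) U)
    (hdom : Trm.subst σ (.pi A B) ∈ domD R calI) :
    interp R calI (.pi A B) σ =
      {t | ∀ a ∈ interp R calI A σ, Trm.app t a ∈ interp R calI B (Trm.scons a σ)} := by
  obtain ⟨_, _, h⟩ := htyp
  exact interp_pi_general hRS hconf hlfp.1 (h.pi_dom_not_isKindLike hRS hpres) h.pi_cod_ne_kind hdom
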